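/- Let u be a vertex of a weighted graph G with neighbors v_1, ..., v_d and edge weights r_{u v_i}. For a Pauli string S^u_x = X_u · Π_i (Z_{v_i})^{x_i} with x ∈ F_2^d of even Hamming weight, and f(·) = (1/4)[H_p, [H_p, ·]], one has f(S^u_x) = c_{xx} S^u_x + 2 Σ_{y: |x⊕y|=2} c_{xy} S^u_y, where c_{xx} = Σ_i r_{u v_i}^2 and c_{xy} = Π_i (r_{u v_i})^{x_i ⊕ y_i}, and the sum ranges over even-weight vectors y differing from x in exactly two coordinates. -/

import Mathlib

/-- The Pauli `X` operator acting on qubit `u` (tensored with identity elsewhere),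
as a matrix on the computational basis `V → Bool`. -/
noncomputable def PX {V : Type*} [Fintype V] [DecidableEq V] (u : V) :
    Matrix (V → Bool) (V → Bool) ℂ :=
  fun s t => if s = Function.update t u (!(t u)) then 1 else 0

/-- The Pauli `Z` operator acting on qubit `u`. -/
noncomputable def PZ {V : Type*} [Fintype V] [DecidableEq V] (u : V) :
    Matrix (V → Bool) (V → Bool) ℂ :=
  Matrix.diagonal fun s => if s u then -1 else 1

/-- The operator `Z_u Z_v` associated with an unordered pair `{u, v}`. -/
noncomputable def PZZ {V : Type*} [Fintype V] [DecidableEq V] (e : Sym2 V) :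
    Matrix (V → Bool) (V → Bool) ℂ :=
  Sym2.lift ⟨fun a b => PZ a * PZ b, fun a b => by
    show PZ a * PZ b = PZ b * PZ a
    unfold PZ
    rw [Matrix.diagonal_mul_diagonal, Matrix.diagonal_mul_diagonal,
      show (fun i : V → Bool => (if i a = true then (-1 : ℂ) else 1) *
          if i b = true then -1 else 1) =
        (fun i : V → Bool => (if i b = true then (-1 : ℂ) else 1) *
          if i a = true then -1 else 1) from funext fun i => mul_comm _ _]⟩ e

/-- The weighted problem Hamiltonian `H_p = Σ_{(u,v)∈E} r_{uv} Z_u Z_v`. -/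
noncomputable def HpW {V : Type*} [Fintype V] [DecidableEq V] (G : SimpleGraph V)
    [DecidableRel G.Adj] (r : Sym2 V → ℝ) : Matrix (V → Bool) (V → Bool) ℂ :=
  ∑ e ∈ G.edgeFinset, (r e : ℂ) • PZZ e

/-- The XZ star `S^u_x = X_u · Π_i (Z_{nbr i})^{x_i}`, where `nbr` enumerates the
neighbors of `u`. -/
noncomputable def evenStar {V : Type*} [Fintype V] [DecidableEq V] (u : V) {d : ℕ}
    (nbr : Fin d → V) (x : Fin d → Bool) : Matrix (V → Bool) (V → Bool) ℂ :=
  PX u * Matrix.diagonal fun s =>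
    ∏ i : Fin d, if x i then (if s (nbr i) then (-1 : ℂ) else 1) else 1

/-- The square of a finite sum, in terms of the second elementary symmetric function. -/
theorem sum_sq_eq_sum_sq_add_two_mul_esymm {ι R : Type*} [DecidableEq ι] [CommRing R]
    (s : Finset ι) (a : ι → R) :
    (∑ i ∈ s, a i) ^ 2 = ∑ i ∈ s, a i ^ 2 + 2 * ∑ t ∈ s.powersetCard 2, ∏ i ∈ t, a i := by
  induction s using Finset.induction_on with
  | empty =>
    rw [Finset.powersetCard_eq_empty.2 (by simp)]
    simp
  | insert j s hj ih =>
    have hdisj : Disjoint (s.powersetCard 2) ((s.powersetCard 1).image (insert j)) := by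
      rw [Finset.disjoint_left]
      intro t ht ht'
      obtain ⟨t', -, rfl⟩ := Finset.mem_image.1 ht'
      exact hj ((Finset.mem_powersetCard.1 ht).1 (Finset.mem_insert_self _ _))
    have hpairs : ∑ t ∈ (s.powersetCard 1).image (insert j), ∏ i ∈ t, a i
        = a j * ∑ i ∈ s, a i := by
      rw [Finset.powersetCard_one, Finset.map_eq_image, Finset.image_image, Finset.sum_image,
        Finset.mul_sum]
      · refine Finset.sum_congr rfl fun i hi => ?_
        exact Finset.prod_pair (by rintro rfl; exact hj hi)
      · intro i hi k hk hik
        have hmem : i ∈ ({j, k} : Finset ι) := by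
          have : ({j, i} : Finset ι) = {j, k} := hik
          rw [← this]; simp
        rcases Finset.mem_insert.1 hmem with h | h
        · exact absurd (h ▸ hi) hj
        · exact Finset.mem_singleton.1 h
    rw [Finset.sum_insert hj, Finset.sum_insert hj, Finset.powersetCard_succ_insert hj,
      Finset.sum_union hdisj, hpairs, add_sq, ih]
    ring

/-- Summing over the Boolean vectors at Hamming distance `k` from `x` amounts to summing over the
`k`-element sets of coordinates. -/
theorem sum_hammingDist_eq_sum_powersetCard {ι M : Type*} [Fintype ι] [DecidableEq ι]
    [AddCommMonoid M] (k : ℕ) (x : ι → Bool) (F : Finset ι → M) :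
    ∑ y ∈ Finset.univ.filter
        (fun y : ι → Bool => (Finset.univ.filter fun i => x i ≠ y i).card = k),
        F (Finset.univ.filter fun i => x i ≠ y i)
      = ∑ t ∈ Finset.univ.powersetCard k, F t := by
  have hflip : ∀ (t : Finset ι) (i : ι), x i ≠ xor (x i) (decide (i ∈ t)) ↔ i ∈ t := by
    intro t i
    cases x i <;> simp
  refine Finset.sum_bij' (fun y _ => Finset.univ.filter fun i => x i ≠ y i)
    (fun t _ i => xor (x i) (decide (i ∈ t))) ?_ ?_ ?_ ?_ ?_
  · intro y hy
    simpa [Finset.mem_powersetCard] using hy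
  · intro t ht
    simpa only [Finset.mem_filter, Finset.mem_univ, true_and, hflip, Finset.filter_univ_mem]
      using (Finset.mem_powersetCard.1 ht).2
  · intro y _
    funext i
    cases hxi : x i <;> cases hyi : y i <;> simp [hxi, hyi]
  · intro t _
    ext i
    simpa using hflip t i
  · intro y _
    rfl

/-- The eigenvalue of Pauli `Z` on a computational basis state of one qubit. -/
noncomputable def zSign (b : Bool) : ℂ := if b then -1 else 1

theorem zSign_not (b : Bool) : zSign (!b) = -zSign b := by
  cases b <;> simp [zSign]

theorem zSign_sq (b : Bool) : zSign b ^ 2 = 1 := by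
  cases b <;> simp [zSign]

/-- The eigenvalue of `Z_a Z_b` on a computational basis state, for an unordered pair. -/
noncomputable def zzSign {V : Type*} (s : V → Bool) (e : Sym2 V) : ℂ :=
  Sym2.lift ⟨fun a b => zSign (s a) * zSign (s b), fun _ _ => mul_comm _ _⟩ e

theorem PZZ_eq_diagonal {V : Type*} [Fintype V] [DecidableEq V] (e : Sym2 V) :
    PZZ e = Matrix.diagonal fun s => zzSign s e := by
  induction e with
  | _ a b => exact Matrix.diagonal_mul_diagonal _ _

theorem HpW_eq_diagonal {V : Type*} [Fintype V] [DecidableEq V] (G : SimpleGraph V)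
    [DecidableRel G.Adj] (r : Sym2 V → ℝ) :
    HpW G r = Matrix.diagonal fun s => ∑ e ∈ G.edgeFinset, (r e : ℂ) * zzSign s e := by
  ext s t
  simp only [HpW, PZZ_eq_diagonal, Matrix.sum_apply, Matrix.smul_apply, Matrix.diagonal_apply]
  split_ifs <;> simp

/-- Flipping the qubit `u` changes the energy only through the edges at `u`. -/
theorem sum_zzSign_update_sub {V : Type*} [Fintype V] [DecidableEq V] (G : SimpleGraph V)
    [DecidableRel G.Adj] (r : Sym2 V → ℝ) (u : V) {d : ℕ} (nbr : Fin d → V)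
    (hinj : Function.Injective nbr) (hnbr : ∀ w : V, G.Adj u w ↔ ∃ i, nbr i = w)
    (t : V → Bool) :
    ∑ e ∈ G.edgeFinset, (r e : ℂ) * zzSign (Function.update t u (!(t u))) e
        - ∑ e ∈ G.edgeFinset, (r e : ℂ) * zzSign t e
      = -2 * zSign (t u) * ∑ i, (r s(u, nbr i) : ℂ) * zSign (t (nbr i)) := by
  have hadj : ∀ i, G.Adj u (nbr i) := fun i => (hnbr _).2 ⟨i, rfl⟩
  have hsub : Finset.univ.image (fun i => s(u, nbr i)) ⊆ G.edgeFinset := by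
    intro e he
    obtain ⟨i, -, rfl⟩ := Finset.mem_image.1 he
    simpa using hadj i
  rw [← Finset.sum_sub_distrib, ← Finset.sum_subset hsub, Finset.sum_image, Finset.mul_sum]
  · refine Finset.sum_congr rfl fun i _ => ?_
    have hne : nbr i ≠ u := (hadj i).ne'
    simp only [zzSign, Sym2.lift_mk, Function.update_self, Function.update_of_ne hne, zSign_not]
    ring
  · intro i _ j _ hij
    exact hinj (Sym2.congr_right.1 hij)
  · intro e he hnot
    induction e with
    | _ a b =>
      have hab : G.Adj a b := by simpa using he
      have ha : a ≠ u := by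
        rintro rfl
        obtain ⟨i, rfl⟩ := (hnbr b).1 hab
        exact hnot (Finset.mem_image_of_mem _ (Finset.mem_univ i))
      have hb : b ≠ u := by
        rintro rfl
        obtain ⟨i, rfl⟩ := (hnbr a).1 hab.symm
        exact hnot (Finset.mem_image.2 ⟨i, Finset.mem_univ i, Sym2.eq_swap⟩)
      simp [zzSign, Function.update_of_ne ha, Function.update_of_ne hb]

theorem evenStar_apply {V : Type*} [Fintype V] [DecidableEq V] (u : V) {d : ℕ}
    (nbr : Fin d → V) (x : Fin d → Bool) (s t : V → Bool) :
    evenStar u nbr x s t = if s = Function.update t u (!(t u)) then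
      ∏ i, (if x i then zSign (t (nbr i)) else 1) else 0 := by
  simp [evenStar, PX, zSign, Matrix.mul_diagonal]

/-- The double commutator with a diagonal matrix acts entrywise. -/
theorem diagonal_lie_lie_apply {n R : Type*} [Fintype n] [DecidableEq n] [CommRing R]
    (h : n → R) (M : Matrix n n R) (s t : n) :
    ⁅Matrix.diagonal h, ⁅Matrix.diagonal h, M⁆⁆ s t = (h s - h t) ^ 2 * M s t := by
  simp only [Ring.lie_def, Matrix.sub_apply, Matrix.diagonal_mul, Matrix.mul_diagonal]
  ring

/-- Toggling the coordinates where `x` and `y` differ turns the `Z`-string of `x` into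
that of `y`. -/
theorem prod_zSign_mul_prod_zSign {ι : Type*} [Fintype ι] (x y b : ι → Bool) :
    (∏ i, if x i ≠ y i then zSign (b i) else 1) * (∏ i, if x i then zSign (b i) else 1)
      = ∏ i, if y i then zSign (b i) else 1 := by
  rw [← Finset.prod_mul_distrib]
  refine Finset.prod_congr rfl fun i _ => ?_
  have hsq := zSign_sq (b i)
  cases x i <;> cases y i <;> simp [← sq, hsq]

/-- for a vertex `u` with neighbors `nbr 0, …, nbr (d-1)` and an even
weight vector `x`, with `f(M) = (1/4)[H_p, [H_p, M]]`,
`f(S^u_x) = c_{xx} S^u_x + 2 Σ_{y : |x⊕y| = 2} c_{xy} S^u_y`,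
where `c_{xx} = Σ_i r_{u,nbr i}²` and `c_{xy} = Π_i r_{u, nbr i}^{x_i ⊕ y_i}`. -/
theorem stmt_9 {V : Type*} [Fintype V] [DecidableEq V] (G : SimpleGraph V)
    [DecidableRel G.Adj] (r : Sym2 V → ℝ) (u : V) (d : ℕ) (nbr : Fin d → V)
    (hinj : Function.Injective nbr)
    (hnbr : ∀ w : V, G.Adj u w ↔ ∃ i, nbr i = w)
    (x : Fin d → Bool)
    (hx : Even ((Finset.univ.filter fun i => x i = true).card)) :
    (4 : ℂ)⁻¹ • ⁅HpW G r, ⁅HpW G r, evenStar u nbr x⁆⁆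
      = (∑ i : Fin d, ((r s(u, nbr i) : ℂ)) ^ 2) • evenStar u nbr x
        + (2 : ℂ) •
            ∑ y ∈ Finset.univ.filter
                (fun y : Fin d → Bool => (Finset.univ.filter fun i => x i ≠ y i).card = 2),
              (∏ i : Fin d, if x i ≠ y i then (r s(u, nbr i) : ℂ) else 1) •
                evenStar u nbr y := by
  ext s t
  rw [HpW_eq_diagonal, Matrix.smul_apply, diagonal_lie_lie_apply]
  simp only [Matrix.add_apply, Matrix.smul_apply, Matrix.sum_apply, evenStar_apply, smul_eq_mul]
  by_cases hst : s = Function.update t u (!(t u))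
  · subst hst
    have hexpand := sum_sq_eq_sum_sq_add_two_mul_esymm Finset.univ
      fun i => (r s(u, nbr i) : ℂ) * zSign (t (nbr i))
    rw [← sum_hammingDist_eq_sum_powersetCard 2 x] at hexpand
    simp only [mul_pow, zSign_sq, mul_one] at hexpand
    have hterm : ∀ y : Fin d → Bool,
        (∏ i, if x i ≠ y i then (r s(u, nbr i) : ℂ) else 1)
            * (∏ i, if y i then zSign (t (nbr i)) else 1)
          = (∏ i ∈ Finset.univ.filter fun i => x i ≠ y i,
              (r s(u, nbr i) : ℂ) * zSign (t (nbr i)))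
            * ∏ i, (if x i then zSign (t (nbr i)) else 1) := by
      intro y
      rw [Finset.prod_mul_distrib, Finset.prod_filter, Finset.prod_filter, mul_assoc,
        prod_zSign_mul_prod_zSign x y fun i => t (nbr i)]
    rw [sum_zzSign_update_sub G r u nbr hinj hnbr]
    simp only [if_true, hterm]
    rw [← Finset.sum_mul, mul_pow, mul_pow, zSign_sq, hexpand]
    ring
  · simp [hst]
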